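/- Let G be a second countable locally compact group, N a closed normal subgroup, π : G → G/N the quotient homomorphism, λ a left Haar measure on G/N and ν a left Haar measure on N. Then there is a normalization of the left Haar measure μ on G with the following property: for every Borel measurable map χ : G/N → G with π∘χ = id_{G/N} and for all Borel sets Q ⊆ G/N and R ⊆ N, one has μ(χ(Q)·R) = λ(Q)·ν(R), where χ(Q)·R = {χ(q)r : q ∈ Q, r ∈ R}. Moreover, the same normalization of μ works simultaneously for all such sections χ. -/

import Mathlib

open MeasureTheory Set
open scoped Pointwise

noncomputable section

/-!
Left invariance of `ν` makes the translate of `ν` to a coset `gN` depend only on `gN`, so averaging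
these translates against `λ` defines a measure `μ` on `G` without choosing a section (Weil's
formula). Translation by `g` permutes the coset measures as it permutes the points of `G ⧸ N`, so
`μ` is left invariant. A section `χ` identifies the coset over `w` with `N` through `n ↦ χ w * n`,
under which `χ(Q)·R` meets the coset in a copy of `R` if `w ∈ Q` and in the empty set otherwise.

The coset measures must depend measurably on the coset. As functions of the representative `g` they
are measurable by Fubini, and measurability descends along `G → G ⧸ N` by the Lusin–Souslin
theorem, applied to the Polish group obtained from `G` by identifying inseparable points.
-/

section Descent

variable {X Y Z : Type*} [TopologicalSpace X] [MeasurableSpace X] [BorelSpace X]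
  [PolishSpace (SeparationQuotient X)] [TopologicalSpace Y] [T0Space Y] [SecondCountableTopology Y]
  [MeasurableSpace Y] [BorelSpace Y] [MeasurableSpace Z] {f : X → Y}

theorem measurableSet_preimage_iff_of_continuous_surjective (hf : Continuous f)
    (hsurj : Function.Surjective f) {s : Set Y} : MeasurableSet (f ⁻¹' s) ↔ MeasurableSet s := by
  refine ⟨fun hs => ?_, fun hs => hf.measurable hs⟩
  borelize (SeparationQuotient X)
  let F : SeparationQuotient X → Y := SeparationQuotient.lift f fun _ _ h => (h.map hf).eq
  have hF : Continuous F := SeparationQuotient.continuous_lift hf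
  have hFsurj : Function.Surjective F :=
    fun y => (hsurj y).imp' SeparationQuotient.mk fun _ hx => hx
  have hborel : ‹MeasurableSpace X› =
      MeasurableSpace.comap SeparationQuotient.mk (borel (SeparationQuotient X)) := by
    rw [BorelSpace.measurable_eq (α := X), ← borel_comap,
      ← SeparationQuotient.isInducing_mk.eq_induced]
  rw [hborel] at hs
  obtain ⟨t, ht, hts⟩ := hs
  have hFt : F ⁻¹' s = t := SeparationQuotient.surjective_mk.preimage_injective hts.symm
  exact (hF.measurable.measurableSet_preimage_iff_of_surjective hFsurj).1 (hFt ▸ ht)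

theorem measurable_comp_iff_of_continuous_surjective (hf : Continuous f)
    (hsurj : Function.Surjective f) {g : Y → Z} : Measurable (g ∘ f) ↔ Measurable g :=
  forall₂_congr fun s _ =>
    measurableSet_preimage_iff_of_continuous_surjective hf hsurj (s := g ⁻¹' s)

end Descent

section Group

variable {G : Type*} [Group G] [TopologicalSpace G] [IsTopologicalGroup G]

theorem polishSpace_of_locallyCompactSpace_group [WeaklyLocallyCompactSpace G]
    [SecondCountableTopology G] [T0Space G] : PolishSpace G := by
  let := IsTopologicalGroup.rightUniformSpace G
  have : IsRightUniformGroup G := ⟨rfl⟩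
  have : CompleteSpace G := IsRightUniformGroup.completeSpace_of_weaklyLocallyCompactSpace
  have : (uniformity G).IsCountablyGenerated := Filter.comap.isCountablyGenerated _ _
  infer_instance

theorem polishSpace_separationQuotient_group [WeaklyLocallyCompactSpace G]
    [SecondCountableTopology G] : PolishSpace (SeparationQuotient G) := by
  have hmk : IsOpenQuotientMap (SeparationQuotient.mk : G → SeparationQuotient G) :=
    SeparationQuotient.isOpenQuotientMap_mk
  have := hmk.weaklyLocallyCompactSpace
  have := hmk.isQuotientMap.secondCountableTopology hmk.isOpenMap
  exact polishSpace_of_locallyCompactSpace_group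

end Group

section Section

variable {G : Type*} [Group G] {H : Subgroup G} {χ : G ⧸ H → G}

theorem section_image_mul_eq (hχ : Function.RightInverse χ QuotientGroup.mk)
    (Q : Set (G ⧸ H)) (R : Set H) :
    χ '' Q * (fun h : H => (h : G)) '' R =
      {g : G | (g : G ⧸ H) ∈ Q ∧ (χ g)⁻¹ * g ∈ (fun h : H => (h : G)) '' R} := by
  ext g
  constructor
  · rintro ⟨_, ⟨q, hq, rfl⟩, _, ⟨r, hr, rfl⟩, rfl⟩
    have hmk : ((χ q * r : G) : G ⧸ H) = q := by rw [QuotientGroup.mk_mul_of_mem _ r.2, hχ]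
    simpa [hmk] using ⟨hq, hr⟩
  · rintro ⟨hQ, hR⟩
    exact ⟨χ g, mem_image_of_mem χ hQ, _, hR, mul_inv_cancel_left _ _⟩

theorem mul_mem_section_image_mul_iff (hχ : Function.RightInverse χ QuotientGroup.mk)
    {Q : Set (G ⧸ H)} {R : Set H} {x : G ⧸ H} {h : H} :
    χ x * h ∈ χ '' Q * (fun h : H => (h : G)) '' R ↔ x ∈ Q ∧ h ∈ R := by
  have hmk : ((χ x * h : G) : G ⧸ H) = x := by rw [QuotientGroup.mk_mul_of_mem _ h.2, hχ]
  simp [section_image_mul_eq hχ, hmk]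

theorem measurableSet_section_image_mul [TopologicalSpace G] [IsTopologicalGroup G]
    [SecondCountableTopology G] [MeasurableSpace G] [BorelSpace G]
    [MeasurableSpace (G ⧸ H)] [BorelSpace (G ⧸ H)] [MeasurableSpace H] [BorelSpace H]
    (hH : IsClosed (H : Set G)) (hχm : Measurable χ)
    (hχ : Function.RightInverse χ QuotientGroup.mk)
    {Q : Set (G ⧸ H)} {R : Set H} (hQ : MeasurableSet Q) (hR : MeasurableSet R) :
    MeasurableSet (χ '' Q * (fun h : H => (h : G)) '' R) := by
  have hmk : Measurable (QuotientGroup.mk : G → G ⧸ H) := QuotientGroup.continuous_mk.measurable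
  have hR' : MeasurableSet ((fun h : H => (h : G)) '' R) :=
    hH.isClosedEmbedding_subtypeVal.measurableEmbedding.measurableSet_image.2 hR
  rw [section_image_mul_eq hχ]
  exact (hmk hQ).inter (((hχm.comp hmk).inv.mul measurable_id) hR')

end Section

section CosetMeasure

variable {G : Type*} [Group G] [TopologicalSpace G] [IsTopologicalGroup G]
  [MeasurableSpace G] [BorelSpace G] {H : Subgroup G} [MeasurableSpace H] [BorelSpace H]

theorem measurable_const_mul_subgroupVal (g : G) : Measurable fun h : H => g * (h : G) :=
  (continuous_const.mul continuous_subtype_val).measurable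

/-- The translate of a left-invariant measure `nu` on a subgroup `H` to a left coset `x` of `H`,
as a measure on the ambient group. It is the push-forward of `nu` along `h ↦ g * h`, which is the
same for all representatives `g` of `x`. -/
def cosetMeasure (nu : Measure H) [nu.IsMulLeftInvariant] (x : G ⧸ H) : Measure G :=
  Quotient.liftOn' x (fun g => nu.map fun h : H => g * (h : G)) fun a b hab => by
    let m : H := ⟨a⁻¹ * b, QuotientGroup.leftRel_apply.1 hab⟩
    have hb : (fun h : H => b * (h : G)) = (fun h : H => a * (h : G)) ∘ (m * ·) := by
      ext h
      simp [m, mul_assoc]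
    rw [hb, ← Measure.map_map (measurable_const_mul_subgroupVal a) (measurable_const_mul m),
      map_mul_left_eq_self]

variable (nu : Measure H) [nu.IsMulLeftInvariant]

namespace cosetMeasure

theorem mk_apply (g : G) {A : Set G} (hA : MeasurableSet A) :
    cosetMeasure nu g A = nu ((fun h : H => g * (h : G)) ⁻¹' A) :=
  Measure.map_apply (measurable_const_mul_subgroupVal g) hA

theorem smul_apply (g : G) (x : G ⧸ H) {A : Set G} (hA : MeasurableSet A) :
    cosetMeasure nu (g • x) A = cosetMeasure nu x ((g * ·) ⁻¹' A) := by
  induction x using QuotientGroup.induction_on with | H a => ?_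
  rw [MulAction.Quotient.smul_coe, mk_apply nu _ hA, mk_apply nu _ (measurable_const_mul g hA)]
  simp [preimage_preimage, mul_assoc]

theorem apply_le_indicator {A : Set G} (hA : MeasurableSet A) (x : G ⧸ H) :
    cosetMeasure nu x A ≤ ((QuotientGroup.mk : G → G ⧸ H) '' A).indicator
      (fun _ => nu ((fun h : H => (h : G)) ⁻¹' (A⁻¹ * A))) x := by
  by_cases hx : x ∈ (QuotientGroup.mk : G → G ⧸ H) '' A
  · obtain ⟨a, ha, rfl⟩ := id hx
    rw [indicator_of_mem hx, mk_apply nu a hA]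
    exact measure_mono fun h hh => ⟨a⁻¹, inv_mem_inv.2 ha, a * h, hh, inv_mul_cancel_left _ _⟩
  · induction x using QuotientGroup.induction_on with | H g => ?_
    have hempty : (fun h : H => g * (h : G)) ⁻¹' A = ∅ :=
      eq_empty_of_forall_notMem fun h hh => hx ⟨_, hh, QuotientGroup.mk_mul_of_mem g h.2⟩
    rw [indicator_of_notMem hx, mk_apply nu g hA, hempty, measure_empty]

theorem mk_apply_pos [nu.IsOpenPosMeasure] {U : Set G} (hU : IsOpen U) {g : G} (hg : g ∈ U) :
    0 < cosetMeasure nu (g : G ⧸ H) U := by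
  rw [mk_apply nu g hU.measurableSet]
  have hopen : IsOpen ((fun h : H => g * (h : G)) ⁻¹' U) :=
    hU.preimage (continuous_const.mul continuous_subtype_val)
  exact hopen.measure_pos nu ⟨1, by simpa using hg⟩

theorem section_image_mul_apply [SecondCountableTopology G]
    [MeasurableSpace (G ⧸ H)] [BorelSpace (G ⧸ H)]
    (hH : IsClosed (H : Set G)) {χ : G ⧸ H → G} (hχm : Measurable χ)
    (hχ : Function.RightInverse χ QuotientGroup.mk)
    {Q : Set (G ⧸ H)} {R : Set H} (hQ : MeasurableSet Q) (hR : MeasurableSet R) (x : G ⧸ H) :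
    cosetMeasure nu x (χ '' Q * (fun h : H => (h : G)) '' R) = Q.indicator (fun _ => nu R) x := by
  have happly := mk_apply nu (χ x) (measurableSet_section_image_mul hH hχm hχ hQ hR)
  rw [hχ x] at happly
  rw [happly]
  simp only [preimage, mul_mem_section_image_mul_iff hχ]
  by_cases hx : x ∈ Q <;> simp [hx]

theorem measurable_apply [LocallyCompactSpace G] [SecondCountableTopology G]
    [MeasurableSpace (G ⧸ H)] [BorelSpace (G ⧸ H)] [SFinite nu] (hH : IsClosed (H : Set G))
    {A : Set G} (hA : MeasurableSet A) : Measurable fun x => cosetMeasure nu x A := by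
  have := polishSpace_separationQuotient_group (G := G)
  have hmul : Measurable fun p : G × H => p.1 * (p.2 : G) :=
    measurable_fst.mul (continuous_subtype_val.measurable.comp measurable_snd)
  rw [← measurable_comp_iff_of_continuous_surjective QuotientGroup.continuous_mk
    QuotientGroup.mk_surjective]
  simp only [Function.comp_def, mk_apply nu _ hA]
  exact measurable_measure_prodMk_left (hmul hA)

protected theorem measurable [LocallyCompactSpace G] [SecondCountableTopology G]
    [MeasurableSpace (G ⧸ H)] [BorelSpace (G ⧸ H)] [SFinite nu] (hH : IsClosed (H : Set G)) :
    Measurable (cosetMeasure nu) :=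
  Measure.measurable_of_measurable_coe _ fun _ hA => measurable_apply nu hH hA

end cosetMeasure

/-- The measure `μ` on `G` obtained by averaging the coset measures of `nu` against a measure `lam`
on `G ⧸ H`. It is the measure of Weil's integration formula
`∫ f dμ = ∫_{G ⧸ H} ∫_H f(g * h) dnu(h) dlam(gH)`. -/
def weilMeasure [MeasurableSpace (G ⧸ H)] (lam : Measure (G ⧸ H)) : Measure G :=
  lam.bind (cosetMeasure nu)

end CosetMeasure

section Weil

variable {G : Type*} [Group G] [TopologicalSpace G] [IsTopologicalGroup G]
  [LocallyCompactSpace G] [SecondCountableTopology G] [MeasurableSpace G] [BorelSpace G]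
  {H : Subgroup G} [MeasurableSpace (G ⧸ H)] [BorelSpace (G ⧸ H)] [MeasurableSpace H] [BorelSpace H]
  (nu : Measure H) [nu.IsMulLeftInvariant] [SFinite nu] (lam : Measure (G ⧸ H))

namespace weilMeasure

theorem apply (hH : IsClosed (H : Set G)) {A : Set G} (hA : MeasurableSet A) :
    weilMeasure nu lam A = ∫⁻ x, cosetMeasure nu x A ∂lam :=
  Measure.bind_apply hA (cosetMeasure.measurable nu hH).aemeasurable

theorem isMulLeftInvariant (hH : IsClosed (H : Set G)) [SMulInvariantMeasure G (G ⧸ H) lam] :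
    (weilMeasure nu lam).IsMulLeftInvariant := by
  refine ⟨fun g => Measure.ext fun A hA => ?_⟩
  calc (weilMeasure nu lam).map (g * ·) A
      = ∫⁻ x, cosetMeasure nu x ((g * ·) ⁻¹' A) ∂lam := by
        rw [Measure.map_apply (measurable_const_mul g) hA,
          apply nu lam hH (measurable_const_mul g hA)]
    _ = ∫⁻ x, cosetMeasure nu (g • x) A ∂lam := by
        simp only [cosetMeasure.smul_apply nu g _ hA]
    _ = ∫⁻ x, cosetMeasure nu x A ∂lam := (measurePreserving_smul g lam).lintegral_comp
        (cosetMeasure.measurable_apply nu hH hA)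
    _ = weilMeasure nu lam A := (apply nu lam hH hA).symm

theorem isFiniteMeasureOnCompacts (hH : IsClosed (H : Set G))
    [IsFiniteMeasureOnCompacts nu] [IsFiniteMeasureOnCompacts lam] :
    IsFiniteMeasureOnCompacts (weilMeasure nu lam) := by
  refine ⟨fun K hK => (measure_mono subset_closure).trans_lt ?_⟩
  let C : Set G := closure K
  have hC : IsCompact C := hK.closure
  have hfiber : nu ((fun h : H => (h : G)) ⁻¹' (C⁻¹ * C)) < ⊤ :=
    (hH.isClosedEmbedding_subtypeVal.isCompact_preimage (hC.inv.mul hC)).measure_lt_top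
  have hbase : lam ((QuotientGroup.mk : G → G ⧸ H) '' C) < ⊤ :=
    (hC.image QuotientGroup.continuous_mk).measure_lt_top
  calc weilMeasure nu lam C
      = ∫⁻ x, cosetMeasure nu x C ∂lam := apply nu lam hH isClosed_closure.measurableSet
    _ ≤ ∫⁻ x, ((QuotientGroup.mk : G → G ⧸ H) '' C).indicator
          (fun _ => nu ((fun h : H => (h : G)) ⁻¹' (C⁻¹ * C))) x ∂lam :=
        lintegral_mono (cosetMeasure.apply_le_indicator nu isClosed_closure.measurableSet)
    _ ≤ nu ((fun h : H => (h : G)) ⁻¹' (C⁻¹ * C)) * lam ((QuotientGroup.mk : G → G ⧸ H) '' C) :=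
        lintegral_indicator_const_le _ _
    _ < ⊤ := ENNReal.mul_lt_top hfiber hbase

theorem isOpenPosMeasure (hH : IsClosed (H : Set G)) [nu.IsOpenPosMeasure] [lam.IsOpenPosMeasure] :
    (weilMeasure nu lam).IsOpenPosMeasure := by
  refine ⟨fun U hU hne h0 => ?_⟩
  rw [apply nu lam hH hU.measurableSet,
    lintegral_eq_zero_iff (cosetMeasure.measurable_apply nu hH hU.measurableSet)] at h0
  have hopen : IsOpen ((QuotientGroup.mk : G → G ⧸ H) '' U) := QuotientGroup.isOpenMap_coe U hU
  refine (hopen.measure_pos lam (hne.image _)).ne' (measure_mono_null ?_ h0)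
  rintro _ ⟨u, hu, rfl⟩
  exact (cosetMeasure.mk_apply_pos nu hU hu).ne'

theorem section_image_mul_apply (hH : IsClosed (H : Set G)) {χ : G ⧸ H → G} (hχm : Measurable χ)
    (hχ : Function.RightInverse χ QuotientGroup.mk)
    {Q : Set (G ⧸ H)} {R : Set H} (hQ : MeasurableSet Q) (hR : MeasurableSet R) :
    weilMeasure nu lam (χ '' Q * (fun h : H => (h : G)) '' R) = lam Q * nu R := by
  rw [apply nu lam hH (measurableSet_section_image_mul hH hχm hχ hQ hR)]
  simp only [cosetMeasure.section_image_mul_apply nu hH hχm hχ hQ hR]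
  rw [lintegral_indicator_const hQ, mul_comm]

end weilMeasure

end Weil

theorem exists_haar_measure_product_formula_general
    {G : Type*} [Group G] [TopologicalSpace G] [IsTopologicalGroup G]
    [LocallyCompactSpace G] [SecondCountableTopology G]
    [MeasurableSpace G] [BorelSpace G]
    (H : Subgroup G) (hH : IsClosed (H : Set G))
    [MeasurableSpace (G ⧸ H)] [BorelSpace (G ⧸ H)]
    [MeasurableSpace H] [BorelSpace H]
    (lam : Measure (G ⧸ H)) [SMulInvariantMeasure G (G ⧸ H) lam]
    [IsFiniteMeasureOnCompacts lam] [lam.IsOpenPosMeasure]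
    (nu : Measure H) [nu.IsHaarMeasure] :
    ∃ μ : Measure G, μ.IsHaarMeasure ∧
      ∀ χ : G ⧸ H → G, Measurable χ →
        (∀ x : G ⧸ H, (QuotientGroup.mk (χ x) : G ⧸ H) = x) →
        ∀ (Q : Set (G ⧸ H)) (R : Set H), MeasurableSet Q → MeasurableSet R →
          μ ((χ '' Q) * ((fun h : H => (h : G)) '' R)) = lam Q * nu R := by
  have : SigmaCompactSpace H := hH.sigmaCompactSpace
  refine ⟨weilMeasure nu lam, ?_, fun χ hχm hχ Q R hQ hR =>
    weilMeasure.section_image_mul_apply nu lam hH hχm hχ hQ hR⟩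
  exact
    { toIsMulLeftInvariant := weilMeasure.isMulLeftInvariant nu lam hH
      toIsFiniteMeasureOnCompacts := weilMeasure.isFiniteMeasureOnCompacts nu lam hH
      toIsOpenPosMeasure := weilMeasure.isOpenPosMeasure nu lam hH }

/-- There is a normalization of the left Haar measure `μ` on `G` such that for every
Borel section `χ : G ⧸ N → G` of the quotient map and all Borel sets `Q ⊆ G ⧸ N`,
`R ⊆ N`, one has `μ(χ(Q)·R) = λ(Q)·ν(R)`; the same `μ` works for every such `χ`. -/
theorem exists_haar_measure_product_formula
    {G : Type*} [Group G] [TopologicalSpace G] [IsTopologicalGroup G]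
    [LocallyCompactSpace G] [SecondCountableTopology G]
    [MeasurableSpace G] [BorelSpace G]
    (N : Subgroup G) [N.Normal] (hNclosed : IsClosed (N : Set G))
    [MeasurableSpace (G ⧸ N)] [BorelSpace (G ⧸ N)]
    [MeasurableSpace ↥N] [BorelSpace ↥N]
    (lam : Measure (G ⧸ N)) [lam.IsHaarMeasure]
    (nu : Measure ↥N) [nu.IsHaarMeasure] :
    ∃ μ : Measure G, μ.IsHaarMeasure ∧
      ∀ χ : G ⧸ N → G, Measurable χ →
        (∀ x : G ⧸ N, (QuotientGroup.mk (χ x) : G ⧸ N) = x) →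
        ∀ (Q : Set (G ⧸ N)) (R : Set ↥N), MeasurableSet Q → MeasurableSet R →
          μ ((χ '' Q) * ((fun n : ↥N => (n : G)) '' R)) = lam Q * nu R := by
  have : SMulInvariantMeasure G (G ⧸ N) lam := ⟨fun g s _ => measure_preimage_mul lam ↑g s⟩
  exact exists_haar_measure_product_formula_general N hNclosed lam nu

end
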